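/- Let b > 0, let v₊, v₋ ∈ ℝ^{n+2} be null with ζ := ⟨v₊,v₋⟩ > 0, and let Δ:(0,b) → End(ℝ^{n+2}) be continuous and bounded with each Δ(t) skew-adjoint with respect to the Minkowski form. Define Ψ(t) := −(1/t)·(v₋∧v₊) + Δ(t), and for each p ∈ (0,b) let G_p:(0,b) → End(ℝ^{n+2}) be differentiable with G_p′(t) = G_p(t)∘Ψ(t) and G_p(p) = id. Then there is a continuous map k:[0,b) → ℝ^{n+2} with k(t) null and nonzero for every t and k(0) = v₊/ζ, such that for every p ∈ (0,b): (t/p)^ζ·G_p(t) converges to the rank-one endomorphism k(p)v₋* as t → 0⁺, and (t/p)^ζ·G_p(t)(k(t)) = k(p) for all t ∈ (0,b). -/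

import Mathlib

open scoped BigOperators Topology
open Filter Set MeasureTheory

noncomputable section

abbrev E (n : ℕ) := EuclideanSpace ℝ (Fin (n + 2))

/-- Minkowski inner product of signature (n+1,1). -/
def mink {n : ℕ} (x y : E n) : ℝ :=
  ∑ i, (if i = Fin.last (n + 1) then (-1 : ℝ) else 1) * x i * y i

variable {n : ℕ}

lemma mink_comm (x y : E n) : mink x y = mink y x :=
  Finset.sum_congr rfl fun i _ => by ring

lemma mink_add_right (v x y : E n) : mink v (x + y) = mink v x + mink v y := by
  simp [mink, mul_add, Finset.sum_add_distrib]

lemma mink_smul_right (v : E n) (c : ℝ) (x : E n) : mink v (c • x) = c * mink v x := by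
  unfold mink
  rw [Finset.mul_sum]
  refine Finset.sum_congr rfl fun i _ => ?_
  simp only [PiLp.smul_apply, smul_eq_mul]
  ring

lemma mink_add_left (x y v : E n) : mink (x + y) v = mink x v + mink y v := by
  rw [mink_comm, mink_add_right, mink_comm v x, mink_comm v y]

lemma mink_smul_left (c : ℝ) (x v : E n) : mink (c • x) v = c * mink x v := by
  rw [mink_comm, mink_smul_right, mink_comm v x]

/-- `v ∧ w` as an endomorphism: `x ↦ ⟨v,x⟩ w − ⟨w,x⟩ v`. -/
def wedge {n : ℕ} (v w : E n) : E n →L[ℝ] E n :=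
  LinearMap.toContinuousLinearMap
    { toFun := fun x => mink v x • w - mink w x • v
      map_add' := by
        intro x y
        simp only [mink_add_right, add_smul]
        abel
      map_smul' := by
        intro c x
        simp only [mink_smul_right, RingHom.id_apply, mul_smul, smul_sub] }

/-- rank one endomorphism `vw* : x ↦ ⟨x,w⟩ v`. -/
def rankOne {n : ℕ} (v w : E n) : E n →L[ℝ] E n :=
  LinearMap.toContinuousLinearMap
    { toFun := fun x => mink x w • v
      map_add' := by
        intro x y
        simp only [mink_add_left, add_smul]
      map_smul' := by
        intro c x
        simp only [mink_smul_left, RingHom.id_apply, mul_smul] }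

/-
Put `ζ := ⟨v₊, v₋⟩` and `N := ζ - v₋ ∧ v₊`. The rescaled primitives `F_p(t) = (t/p)^ζ G_p(t)`
satisfy `F_p' = F_p (N/t + Δ)`, and `N` is diagonalizable with eigenvalues `0`, `ζ`, `2ζ`. Hence
`x ^ N` extends continuously to `x = 0`, with value the projection `v₊ v₋* / ζ` onto `ker N`.
Differentiating `s ↦ F_p(s) (t/s)^N` removes the pole and leaves `F_p(s) Δ(s) (t/s)^N`, so
`F_p(t) = F_p(q) (t/q)^N + O(q - t)`. This bounds `F_p` near `0`, makes it converge to some `L(p)`,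
and shows `L(p) → v₊ v₋* / ζ` as `p → 0`. The vector `k(p) = L(p) (v₊/ζ)` solves
`k' = -(N/t + Δ) k`, so that `t^(2ζ) ⟨k, k⟩` is constant; it tends to `0`, hence `k` is null.
-/

theorem tendsto_const_mul_nhdsGT_zero (K : ℝ) : Tendsto (fun t => K * t) (𝓝[>] 0) (𝓝 0) :=
  ((continuous_const_mul K).tendsto' 0 0 (mul_zero K)).mono_left nhdsWithin_le_nhds

theorem cauchy_map_of_eventually_dist_lt {α β : Type*} [PseudoMetricSpace β] {l : Filter α}
    [l.NeBot] {u : α → β} (h : ∀ ε > 0, ∃ y, ∀ᶠ a in l, dist (u a) y < ε) :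
    Cauchy (map u l) := by
  refine Metric.cauchy_iff.2 ⟨inferInstance, fun ε hε => ?_⟩
  obtain ⟨y, hy⟩ := h (ε / 2) (half_pos hε)
  refine ⟨Metric.ball y (ε / 2), hy, fun v hv w hw => ?_⟩
  calc dist v w ≤ dist v y + dist w y := dist_triangle_right v w y
    _ < ε / 2 + ε / 2 := add_lt_add hv hw
    _ = ε := add_halves ε

section PowerFlow

variable {R : Type*} [NormedRing R] [NormedAlgebra ℝ R]

/-- `T` is the function `x ↦ x ^ N = exp (log x • N)` and it extends continuously to `x = 0`.
The extension is part of `T`, whose value `T 0` is `lim x ^ N` as `x → 0⁺`. -/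
structure IsPowerFlow (N : R) (T : ℝ → R) : Prop where
  continuousOn : ContinuousOn T (Icc 0 1)
  map_one : T 1 = 1
  hasDerivAt : ∀ x, 0 < x → HasDerivAt T (x⁻¹ • (N * T x)) x

theorem isPowerFlow_sum {ι : Type*} [Fintype ι] {N : R} {c : ι → ℝ} {P : ι → R}
    (hc : ∀ i, 0 ≤ c i) (hP : ∑ i, P i = 1) (hN : ∀ i, N * P i = c i • P i) :
    IsPowerFlow N (fun x => ∑ i, x ^ c i • P i) where
  continuousOn := (continuous_finsetSum _ fun i _ =>
    (Real.continuous_rpow_const (hc i)).smul continuous_const).continuousOn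
  map_one := by simpa only [Real.one_rpow, one_smul] using hP
  hasDerivAt x hx := by
    refine (HasDerivAt.fun_sum fun i _ =>
      (Real.hasDerivAt_rpow_const (Or.inl hx.ne')).smul_const (P i)).congr_deriv ?_
    rw [Finset.mul_sum, Finset.smul_sum]
    refine Finset.sum_congr rfl fun i _ => ?_
    rw [mul_smul_comm, hN, smul_smul, smul_smul, Real.rpow_sub_one hx.ne']
    congr 1
    ring

variable {N : R} {T Δ X : ℝ → R} {C D S q t : ℝ}

namespace IsPowerFlow

theorem exists_norm_le (hT : IsPowerFlow N T) : ∃ C, ∀ x ∈ Icc 0 1, ‖T x‖ ≤ C :=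
  isCompact_Icc.exists_bound_of_continuousOn hT.continuousOn

theorem hasDerivAt_mul_comp_div (hT : IsPowerFlow N T) {s : ℝ} (ht : 0 < t) (hs : 0 < s) {δ : R}
    (hX : HasDerivAt X (X s * (s⁻¹ • N + δ)) s) :
    HasDerivAt (fun s => X s * T (t / s)) (X s * δ * T (t / s)) s := by
  have hdiv : HasDerivAt (fun s : ℝ => t / s) (-t / s ^ 2) s := by
    simpa using (hasDerivAt_const s t).fun_div (hasDerivAt_id s) hs.ne'
  have hflow : HasDerivAt (fun s => T (t / s)) (-(s⁻¹ • (N * T (t / s)))) s := by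
    refine ((hT.hasDerivAt (t / s) (div_pos ht hs)).scomp s hdiv).congr_deriv ?_
    rw [smul_smul, ← neg_smul]
    congr 1
    field_simp
  refine (hX.mul hflow).congr_deriv ?_
  simp only [mul_add, add_mul, mul_neg, mul_smul_comm, smul_mul_assoc, mul_assoc]
  abel

theorem norm_sub_mul_le (hT : IsPowerFlow N T) (hC : ∀ x ∈ Icc 0 1, ‖T x‖ ≤ C) (ht : 0 < t)
    (htq : t ≤ q) (hΔ : ∀ s ∈ Icc t q, ‖Δ s‖ ≤ D)
    (hX : ∀ s ∈ Icc t q, HasDerivAt X (X s * (s⁻¹ • N + Δ s)) s)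
    (hS : ∀ s ∈ Icc t q, ‖X s‖ ≤ S) :
    ‖X t - X q * T (t / q)‖ ≤ S * D * C * (q - t) := by
  have hderiv : ∀ s ∈ Icc t q, HasDerivWithinAt (fun s => X s * T (t / s))
      (X s * Δ s * T (t / s)) (Icc t q) s := fun s hs =>
    (hT.hasDerivAt_mul_comp_div ht (ht.trans_le hs.1) (hX s hs)).hasDerivWithinAt
  have hbound : ∀ s ∈ Icc t q, ‖X s * Δ s * T (t / s)‖ ≤ S * D * C := by
    intro s hs
    have hs0 : 0 < s := ht.trans_le hs.1
    have hS0 : 0 ≤ S := (norm_nonneg _).trans (hS s hs)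
    have hD0 : 0 ≤ D := (norm_nonneg _).trans (hΔ s hs)
    calc ‖X s * Δ s * T (t / s)‖ ≤ ‖X s‖ * ‖Δ s‖ * ‖T (t / s)‖ := norm_mul₃_le
      _ ≤ S * D * C := by
        gcongr
        · exact hS s hs
        · exact hΔ s hs
        · exact hC _ ⟨(div_pos ht hs0).le, (div_le_one hs0).2 hs.1⟩
  have hmvt := (convex_Icc t q).norm_image_sub_le_of_norm_hasDerivWithin_le hderiv hbound
    (right_mem_Icc.2 htq) (left_mem_Icc.2 htq)
  rwa [div_self ht.ne', hT.map_one, mul_one, Real.norm_of_nonpos (sub_nonpos.2 htq), neg_sub]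
    at hmvt

theorem norm_le_two_mul (hT : IsPowerFlow N T) (hC : ∀ x ∈ Icc 0 1, ‖T x‖ ≤ C) (ht : 0 < t)
    (htq : t ≤ q) (hΔ : ∀ s ∈ Icc t q, ‖Δ s‖ ≤ D)
    (hX : ∀ s ∈ Icc t q, HasDerivAt X (X s * (s⁻¹ • N + Δ s)) s)
    (hsmall : D * C * (q - t) ≤ 1 / 2) : ‖X t‖ ≤ 2 * (‖X q‖ * C) := by
  have hXc : ContinuousOn X (Icc t q) := fun s hs => (hX s hs).continuousAt.continuousWithinAt
  obtain ⟨s, hs, hmax⟩ := isCompact_Icc.exists_isMaxOn (nonempty_Icc.2 htq) hXc.norm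
  have hs0 : 0 < s := ht.trans_le hs.1
  have hq : 0 < q := ht.trans_le htq
  have hsub : Icc s q ⊆ Icc t q := Icc_subset_Icc_left hs.1
  have hD0 : 0 ≤ D := (norm_nonneg _).trans (hΔ s hs)
  have hC0 : 0 ≤ C := (norm_nonneg _).trans (hC 1 (right_mem_Icc.2 zero_le_one))
  have hdiff : ‖X s - X q * T (s / q)‖ ≤ ‖X s‖ * (D * C * (q - t)) :=
    calc ‖X s - X q * T (s / q)‖ ≤ ‖X s‖ * D * C * (q - s) :=
          hT.norm_sub_mul_le hC hs0 hs.2 (fun r hr => hΔ r (hsub hr))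
            (fun r hr => hX r (hsub hr)) fun r hr => hmax (hsub hr)
      _ ≤ ‖X s‖ * D * C * (q - t) := by gcongr; exact hs.1
      _ = ‖X s‖ * (D * C * (q - t)) := by ring
  have hmul : ‖X q * T (s / q)‖ ≤ ‖X q‖ * C :=
    norm_mul_le_of_le le_rfl (hC _ ⟨(div_pos hs0 hq).le, (div_le_one hq).2 hs.2⟩)
  have hself : ‖X s‖ ≤ ‖X s‖ * (1 / 2) + ‖X q‖ * C :=
    calc ‖X s‖ ≤ ‖X s - X q * T (s / q)‖ + ‖X q * T (s / q)‖ := norm_le_norm_sub_add _ _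
      _ ≤ ‖X s‖ * (1 / 2) + ‖X q‖ * C := by
        gcongr
        exact hdiff.trans (by gcongr)
  calc ‖X t‖ ≤ ‖X s‖ := hmax (left_mem_Icc.2 htq)
    _ ≤ 2 * (‖X q‖ * C) := by linarith

theorem tendsto_mul_comp_div (hT : IsPowerFlow N T) (A : R) {r : ℝ} (hr : 0 < r) :
    Tendsto (fun t => A * T (t / r)) (𝓝[>] 0) (𝓝 (A * T 0)) := by
  have hdiv : Tendsto (fun t : ℝ => t / r) (𝓝[>] 0) (𝓝[Icc 0 1] 0) := by
    refine tendsto_nhdsWithin_iff.2 ⟨?_, ?_⟩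
    · exact (Continuous.tendsto' (by fun_prop) 0 _ (zero_div r)).mono_left nhdsWithin_le_nhds
    · filter_upwards [Ioo_mem_nhdsGT hr] with t ht
      exact ⟨(div_pos ht.1 hr).le, (div_le_one hr).2 ht.2.le⟩
  exact ((hT.continuousOn 0 (left_mem_Icc.2 zero_le_one)).tendsto.comp hdiv).const_mul A

theorem eventually_norm_sub_mul_le (hT : IsPowerFlow N T) (hC : ∀ x ∈ Icc 0 1, ‖T x‖ ≤ C)
    (hΔ : ∀ s ∈ Ioc 0 q, ‖Δ s‖ ≤ D)
    (hX : ∀ s ∈ Ioc 0 q, HasDerivAt X (X s * (s⁻¹ • N + Δ s)) s)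
    (hS : ∀ s ∈ Ioc 0 q, ‖X s‖ ≤ S) {r : ℝ} (hr : r ∈ Ioc 0 q) :
    ∀ᶠ t in 𝓝[>] 0, ‖X t - X r * T (t / r)‖ ≤ S * D * C * (r - t) := by
  filter_upwards [Ioc_mem_nhdsGT hr.1] with t ht
  have hsub : ∀ s ∈ Icc t r, s ∈ Ioc 0 q := fun s hs => ⟨ht.1.trans_le hs.1, hs.2.trans hr.2⟩
  exact hT.norm_sub_mul_le hC ht.1 ht.2 (fun s hs => hΔ s (hsub s hs))
    (fun s hs => hX s (hsub s hs)) fun s hs => hS s (hsub s hs)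

theorem exists_tendsto [CompleteSpace R] (hT : IsPowerFlow N T)
    (hC : ∀ x ∈ Icc 0 1, ‖T x‖ ≤ C) (hq : 0 < q) (hΔ : ∀ s ∈ Ioc 0 q, ‖Δ s‖ ≤ D)
    (hX : ∀ s ∈ Ioc 0 q, HasDerivAt X (X s * (s⁻¹ • N + Δ s)) s)
    (hS : ∀ s ∈ Ioc 0 q, ‖X s‖ ≤ S) :
    ∃ M, Tendsto X (𝓝[>] 0) (𝓝 M) ∧ ∀ r ∈ Ioc 0 q, ‖M - X r * T 0‖ ≤ S * D * C * r := by
  have hest : ∀ r ∈ Ioc 0 q, ∀ᶠ t in 𝓝[>] 0, ‖X t - X r * T (t / r)‖ ≤ S * D * C * (r - t) :=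
    fun r hr => hT.eventually_norm_sub_mul_le hC hΔ hX hS hr
  have hlim : ∀ r, Tendsto (fun t => S * D * C * (r - t)) (𝓝[>] 0) (𝓝 (S * D * C * r)) :=
    fun r => (Continuous.tendsto' (by fun_prop) 0 _ (by simp)).mono_left nhdsWithin_le_nhds
  have hcauchy : Cauchy (map X (𝓝[>] 0)) := by
    refine cauchy_map_of_eventually_dist_lt fun ε hε => ?_
    have hsmall : Tendsto (fun r => S * D * C * r) (𝓝[>] 0) (𝓝 0) :=
      tendsto_const_mul_nhdsGT_zero _
    obtain ⟨r, hrε, hr⟩ :=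
      ((hsmall.eventually_lt_const (half_pos hε)).and (Ioc_mem_nhdsGT hq)).exists
    refine ⟨X r * T 0, ?_⟩
    filter_upwards [hest r hr, (hlim r).eventually_lt_const hrε,
      (hT.tendsto_mul_comp_div (X r) hr.1).eventually (Metric.ball_mem_nhds _ (half_pos hε))]
      with t hXt hKt hTt
    calc dist (X t) (X r * T 0)
        ≤ dist (X t) (X r * T (t / r)) + dist (X r * T (t / r)) (X r * T 0) := dist_triangle _ _ _
      _ < ε / 2 + ε / 2 := add_lt_add (by rw [dist_eq_norm]; exact hXt.trans_lt hKt) hTt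
      _ = ε := add_halves ε
  obtain ⟨M, hM⟩ := cauchy_map_iff_exists_tendsto.1 hcauchy
  exact ⟨M, hM, fun r hr => le_of_tendsto_of_tendsto
    (hM.sub (hT.tendsto_mul_comp_div (X r) hr.1)).norm (hlim r) (hest r hr)⟩

end IsPowerFlow

end PowerFlow

theorem eqOn_Ioo_of_hasDerivAt_mul {R : Type*} [NormedRing R] [NormedAlgebra ℝ R]
    {Ψ X Y : ℝ → R} {a b K t₀ : ℝ} (hΨ : ∀ t ∈ Ioo a b, ‖Ψ t‖ ≤ K)
    (hX : ∀ t ∈ Ioo a b, HasDerivAt X (X t * Ψ t) t)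
    (hY : ∀ t ∈ Ioo a b, HasDerivAt Y (Y t * Ψ t) t) (ht₀ : t₀ ∈ Ioo a b) (h : X t₀ = Y t₀) :
    EqOn X Y (Ioo a b) := by
  have hlip : ∀ t ∈ Ioo a b, LipschitzOnWith K.toNNReal (fun x => x * Ψ t) univ := by
    refine fun t ht => LipschitzOnWith.of_dist_le_mul fun x _ y _ => ?_
    rw [dist_eq_norm, dist_eq_norm, ← sub_mul, mul_comm _ ‖x - y‖]
    exact norm_mul_le_of_le le_rfl ((hΨ t ht).trans (Real.le_coe_toNNReal K))
  exact ODE_solution_unique_of_mem_Ioo hlip ht₀ (fun t ht => ⟨hX t ht, mem_univ _⟩)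
    (fun t ht => ⟨hY t ht, mem_univ _⟩) h

section PolePrimitive

/-- `F p` is, for every `p ∈ (0, b)`, the primitive on `(0, b)` of the pole form
`Ψ t = t⁻¹ • N + Δ t` normalized at `p`, that is, `(F p)' = F p * Ψ` and `F p p = 1`. -/
structure IsPolePrimitive {R : Type*} [NormedRing R] [NormedAlgebra ℝ R] (b : ℝ) (N : R)
    (Δ : ℝ → R) (F : ℝ → ℝ → R) : Prop where
  hasDerivAt : ∀ p ∈ Ioo 0 b, ∀ t ∈ Ioo 0 b, HasDerivAt (F p) (F p t * (t⁻¹ • N + Δ t)) t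
  self : ∀ p ∈ Ioo 0 b, F p p = 1

/-- The limit `lim F p t` as `t → 0⁺`, as a function of the base point `p`; a junk value where the
limit does not exist. -/
def poleLimit {R : Type*} [TopologicalSpace R] [Nonempty R] (F : ℝ → ℝ → R) (p : ℝ) : R :=
  limUnder (𝓝[>] 0) (F p)

namespace IsPolePrimitive

variable {R : Type*} [NormedRing R] [NormedAlgebra ℝ R] {N : R} {T Δ : ℝ → R} {F : ℝ → ℝ → R}
  {b C D p q s t : ℝ}

theorem rescale (hF : IsPolePrimitive b N Δ F) (z : ℝ) :
    IsPolePrimitive b (z • 1 + N) Δ (fun p t => (t / p) ^ z • F p t) where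
  hasDerivAt p hp t ht := by
    have hpow : HasDerivAt (fun t : ℝ => (t / p) ^ z) (z / t * (t / p) ^ z) t := by
      refine (((hasDerivAt_id t).div_const p).rpow_const
        (Or.inl (div_pos ht.1 hp.1).ne')).congr_deriv ?_
      rw [id, Real.rpow_sub_one (div_pos ht.1 hp.1).ne']
      have := hp.1.ne'
      field_simp
    refine (hpow.smul (hF.hasDerivAt p hp t ht)).congr_deriv ?_
    simp only [smul_add, mul_add, smul_mul_assoc, mul_smul_comm, mul_one]
    module
  self p hp := by rw [div_self hp.1.ne', Real.one_rpow, one_smul, hF.self p hp]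

theorem mul_eq (hF : IsPolePrimitive b N Δ F) (hΔ : ∀ t ∈ Ioo 0 b, ‖Δ t‖ ≤ D)
    (hp : p ∈ Ioo 0 b) (hq : q ∈ Ioo 0 b) (hs : s ∈ Ioo 0 b) : F p q * F q s = F p s := by
  obtain ⟨c, hc0, hc⟩ := exists_between (lt_min hq.1 hs.1)
  obtain ⟨hcq, hcs⟩ := lt_min_iff.1 hc
  have hsub : ∀ t ∈ Ioo c b, t ∈ Ioo 0 b := fun t ht => ⟨hc0.trans ht.1, ht.2⟩
  have hΨ : ∀ t ∈ Ioo c b, ‖t⁻¹ • N + Δ t‖ ≤ c⁻¹ * ‖N‖ + D := by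
    intro t ht
    refine norm_add_le_of_le ?_ (hΔ t (hsub t ht))
    rw [norm_smul, norm_inv, Real.norm_of_nonneg (hsub t ht).1.le]
    have := ht.1
    gcongr
  refine eqOn_Ioo_of_hasDerivAt_mul (X := fun t => F p q * F q t) (Y := F p) hΨ
    (fun t ht => ?_) (fun t ht => hF.hasDerivAt p hp t (hsub t ht)) ⟨hcq, hq.2⟩
    (by rw [hF.self q hq, mul_one]) ⟨hcs, hs.2⟩
  simpa only [mul_assoc] using (hF.hasDerivAt q hq t (hsub t ht)).const_mul (F p q)

theorem mul_swap (hF : IsPolePrimitive b N Δ F) (hΔ : ∀ t ∈ Ioo 0 b, ‖Δ t‖ ≤ D)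
    (hp : p ∈ Ioo 0 b) (hq : q ∈ Ioo 0 b) : F p q * F q p = 1 := by
  rw [hF.mul_eq hΔ hp hq hp, hF.self p hp]

variable [CompleteSpace R]

theorem hasDerivAt_basePoint (hF : IsPolePrimitive b N Δ F) (hΔ : ∀ t ∈ Ioo 0 b, ‖Δ t‖ ≤ D)
    (hq : q ∈ Ioo 0 b) (ht : t ∈ Ioo 0 b) :
    HasDerivAt (fun s => F s q) (-((t⁻¹ • N + Δ t) * F t q)) t := by
  let u : ∀ s ∈ Ioo 0 b, Rˣ := fun s hs =>
    ⟨F q s, F s q, hF.mul_swap hΔ hq hs, hF.mul_swap hΔ hs hq⟩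
  have hinv : HasDerivAt (fun s => Ring.inverse (F q s)) (-((t⁻¹ • N + Δ t) * F t q)) t := by
    refine ((hasFDerivAt_ringInverse (𝕜 := ℝ) (u t ht)).comp_hasDerivAt t
      (hF.hasDerivAt q hq t ht)).congr_deriv ?_
    change -(F t q * (F q t * (t⁻¹ • N + Δ t)) * F t q) = _
    rw [← mul_assoc (F t q), hF.mul_swap hΔ ht hq, one_mul]
  refine hinv.congr_of_eventuallyEq ?_
  filter_upwards [isOpen_Ioo.mem_nhds ht] with s hs
  exact (Ring.inverse_unit (u s hs)).symm

theorem exists_tendsto_of_small (hF : IsPolePrimitive b N Δ F) (hT : IsPowerFlow N T)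
    (hC : ∀ x ∈ Icc 0 1, ‖T x‖ ≤ C) (hΔ : ∀ t ∈ Ioo 0 b, ‖Δ t‖ ≤ D) (hq : q ∈ Ioo 0 b)
    (hsmall : D * C * q ≤ 1 / 2) :
    ∃ M, Tendsto (F q) (𝓝[>] 0) (𝓝 M) ∧ M * T 0 = M ∧
      ‖M - T 0‖ ≤ 2 * (‖(1 : R)‖ * C) * D * C * q := by
  have hD0 : 0 ≤ D := (norm_nonneg _).trans (hΔ q hq)
  have hC0 : 0 ≤ C := (norm_nonneg _).trans (hC 1 (right_mem_Icc.2 zero_le_one))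
  have hsub : ∀ s ∈ Ioc 0 q, s ∈ Ioo 0 b := fun s hs => ⟨hs.1, hs.2.trans_lt hq.2⟩
  have hbound : ∀ t ∈ Ioc 0 q, ‖F q t‖ ≤ 2 * (‖(1 : R)‖ * C) := by
    intro t ht
    have hsub' : ∀ s ∈ Icc t q, s ∈ Ioo 0 b := fun s hs => hsub s ⟨ht.1.trans_le hs.1, hs.2⟩
    have hle : D * C * (q - t) ≤ 1 / 2 :=
      le_trans (by gcongr; exact sub_le_self q ht.1.le) hsmall
    simpa only [hF.self q hq] using hT.norm_le_two_mul hC ht.1 ht.2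
      (fun s hs => hΔ s (hsub' s hs)) (fun s hs => hF.hasDerivAt q hq s (hsub' s hs)) hle
  obtain ⟨M, hM, hest⟩ := hT.exists_tendsto hC hq.1 (fun s hs => hΔ s (hsub s hs))
    (fun s hs => hF.hasDerivAt q hq s (hsub s hs)) hbound
  refine ⟨M, hM, ?_, ?_⟩
  · have hzero : Tendsto (fun r => 2 * (‖(1 : R)‖ * C) * D * C * r) (𝓝[>] 0) (𝓝 0) :=
      tendsto_const_mul_nhdsGT_zero _
    have hle : ‖M - M * T 0‖ ≤ 0 := by
      refine le_of_tendsto_of_tendsto ((hM.mul_const (T 0)).const_sub M).norm hzero ?_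
      filter_upwards [Ioc_mem_nhdsGT hq.1] with r hr using hest r hr
    exact (sub_eq_zero.1 (norm_le_zero_iff.1 hle)).symm
  · simpa only [hF.self q hq, one_mul] using hest q (right_mem_Ioc.2 hq.1)

theorem eventually_exists_tendsto (hF : IsPolePrimitive b N Δ F) (hT : IsPowerFlow N T)
    (hb : 0 < b) (hΔ : ∀ t ∈ Ioo 0 b, ‖Δ t‖ ≤ D) :
    ∃ K, ∀ᶠ q in 𝓝[>] 0, ∃ M, Tendsto (F q) (𝓝[>] 0) (𝓝 M) ∧ M * T 0 = M ∧
      ‖M - T 0‖ ≤ K * q := by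
  obtain ⟨C, hC⟩ := hT.exists_norm_le
  have hzero : Tendsto (fun q => D * C * q) (𝓝[>] 0) (𝓝 0) :=
    tendsto_const_mul_nhdsGT_zero _
  refine ⟨2 * (‖(1 : R)‖ * C) * D * C, ?_⟩
  filter_upwards [Ioo_mem_nhdsGT hb, hzero.eventually_le_const one_half_pos] with q hq hsmall
  exact hF.exists_tendsto_of_small hT hC hΔ hq hsmall

theorem tendsto_poleLimit_and_mul (hF : IsPolePrimitive b N Δ F) (hT : IsPowerFlow N T)
    (hΔ : ∀ t ∈ Ioo 0 b, ‖Δ t‖ ≤ D) (hp : p ∈ Ioo 0 b) :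
    Tendsto (F p) (𝓝[>] 0) (𝓝 (poleLimit F p)) ∧ poleLimit F p * T 0 = poleLimit F p := by
  have hb : 0 < b := hp.1.trans hp.2
  obtain ⟨K, hK⟩ := hF.eventually_exists_tendsto hT hb hΔ
  obtain ⟨q, ⟨M, hM, hMT, -⟩, hq⟩ := (hK.and (Ioo_mem_nhdsGT hb)).exists
  have hlim : Tendsto (F p) (𝓝[>] 0) (𝓝 (F p q * M)) := by
    refine (hM.const_mul (F p q)).congr' ?_
    filter_upwards [Ioo_mem_nhdsGT hb] with t ht using hF.mul_eq hΔ hp hq ht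
  have heq : poleLimit F p = F p q * M := hlim.limUnder_eq
  exact ⟨heq ▸ hlim, by rw [heq, mul_assoc, hMT]⟩

theorem tendsto_poleLimit (hF : IsPolePrimitive b N Δ F) (hT : IsPowerFlow N T)
    (hΔ : ∀ t ∈ Ioo 0 b, ‖Δ t‖ ≤ D) (hp : p ∈ Ioo 0 b) :
    Tendsto (F p) (𝓝[>] 0) (𝓝 (poleLimit F p)) :=
  (hF.tendsto_poleLimit_and_mul hT hΔ hp).1

theorem poleLimit_mul (hF : IsPolePrimitive b N Δ F) (hT : IsPowerFlow N T)
    (hΔ : ∀ t ∈ Ioo 0 b, ‖Δ t‖ ≤ D) (hp : p ∈ Ioo 0 b) :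
    poleLimit F p * T 0 = poleLimit F p :=
  (hF.tendsto_poleLimit_and_mul hT hΔ hp).2

theorem mul_poleLimit (hF : IsPolePrimitive b N Δ F) (hT : IsPowerFlow N T)
    (hΔ : ∀ t ∈ Ioo 0 b, ‖Δ t‖ ≤ D) (hp : p ∈ Ioo 0 b) (ht : t ∈ Ioo 0 b) :
    F p t * poleLimit F t = poleLimit F p := by
  refine tendsto_nhds_unique (((hF.tendsto_poleLimit hT hΔ ht).const_mul (F p t)).congr' ?_)
    (hF.tendsto_poleLimit hT hΔ hp)
  filter_upwards [Ioo_mem_nhdsGT (hp.1.trans hp.2)] with s hs using hF.mul_eq hΔ hp ht hs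

theorem tendsto_poleLimit_zero (hF : IsPolePrimitive b N Δ F) (hT : IsPowerFlow N T)
    (hb : 0 < b) (hΔ : ∀ t ∈ Ioo 0 b, ‖Δ t‖ ≤ D) :
    Tendsto (poleLimit F) (𝓝[>] 0) (𝓝 (T 0)) := by
  obtain ⟨K, hK⟩ := hF.eventually_exists_tendsto hT hb hΔ
  have hzero : Tendsto (fun q => K * q) (𝓝[>] 0) (𝓝 0) :=
    tendsto_const_mul_nhdsGT_zero _
  refine tendsto_iff_norm_sub_tendsto_zero.2
    (squeeze_zero' (Eventually.of_forall fun _ => norm_nonneg _) ?_ hzero)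
  filter_upwards [hK] with q hq
  obtain ⟨M, hM, -, hle⟩ := hq
  rwa [poleLimit, hM.limUnder_eq]

theorem hasDerivAt_poleLimit (hF : IsPolePrimitive b N Δ F) (hT : IsPowerFlow N T)
    (hΔ : ∀ t ∈ Ioo 0 b, ‖Δ t‖ ≤ D) (ht : t ∈ Ioo 0 b) :
    HasDerivAt (poleLimit F) (-((t⁻¹ • N + Δ t) * poleLimit F t)) t := by
  refine (((hF.hasDerivAt_basePoint hΔ ht ht).mul_const (poleLimit F t)).congr_deriv
    ?_).congr_of_eventuallyEq ?_
  · rw [hF.self t ht, mul_one, neg_mul]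
  · filter_upwards [isOpen_Ioo.mem_nhds ht] with s hs
    exact (hF.mul_poleLimit hT hΔ hs ht).symm

end IsPolePrimitive

end PolePrimitive

section PoleVector

variable {V : Type*} [NormedAddCommGroup V] [NormedSpace ℝ V] {N : V →L[ℝ] V}
  {T Δ : ℝ → V →L[ℝ] V} {F : ℝ → ℝ → V →L[ℝ] V} {u : V} {b D p t : ℝ}

/-- The images `poleLimit F p u` of a vector `u`, as a function of the base point `p`, extended
by `u` to `p = 0`. For the primitives `F` of a pole form with residue `N` this extension is
continuous when `u` is in the kernel of `N`. -/
def poleVector (F : ℝ → ℝ → V →L[ℝ] V) (u : V) : ℝ → V :=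
  Function.update (fun p => poleLimit F p u) 0 u

theorem poleVector_zero (F : ℝ → ℝ → V →L[ℝ] V) (u : V) : poleVector F u 0 = u :=
  Function.update_self ..

theorem poleVector_of_ne_zero (F : ℝ → ℝ → V →L[ℝ] V) (u : V) (hp : p ≠ 0) :
    poleVector F u p = poleLimit F p u :=
  Function.update_of_ne hp ..

namespace IsPolePrimitive

variable [CompleteSpace V]

theorem hasDerivAt_poleLimit_apply (hF : IsPolePrimitive b N Δ F) (hT : IsPowerFlow N T)
    (hΔ : ∀ t ∈ Ioo 0 b, ‖Δ t‖ ≤ D) (u : V) (ht : t ∈ Ioo 0 b) :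
    HasDerivAt (fun p => poleLimit F p u) (-(t⁻¹ • N (poleLimit F t u) + Δ t (poleLimit F t u)))
      t := by
  simpa using (hF.hasDerivAt_poleLimit hT hΔ ht).clm_apply (hasDerivAt_const t u)

theorem tendsto_poleLimit_apply (hF : IsPolePrimitive b N Δ F) (hT : IsPowerFlow N T)
    (hb : 0 < b) (hΔ : ∀ t ∈ Ioo 0 b, ‖Δ t‖ ≤ D) (hu : T 0 u = u) :
    Tendsto (fun p => poleLimit F p u) (𝓝[>] 0) (𝓝 u) :=
  ((continuous_eval_const u).tendsto' (T 0) u hu).comp (hF.tendsto_poleLimit_zero hT hb hΔ)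

theorem continuousOn_poleVector (hF : IsPolePrimitive b N Δ F) (hT : IsPowerFlow N T)
    (hΔ : ∀ t ∈ Ioo 0 b, ‖Δ t‖ ≤ D) (hu : T 0 u = u) :
    ContinuousOn (poleVector F u) (Ico 0 b) := by
  rw [poleVector, continuousOn_update_iff, Ico_sdiff_left]
  refine ⟨fun t ht => ?_, fun h0 => ?_⟩
  · exact (hF.hasDerivAt_poleLimit_apply hT hΔ u ht).continuousAt.continuousWithinAt
  · rw [nhdsWithin_Ioo_eq_nhdsGT h0.2]
    exact hF.tendsto_poleLimit_apply hT h0.2 hΔ hu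

theorem apply_poleVector (hF : IsPolePrimitive b N Δ F) (hT : IsPowerFlow N T)
    (hΔ : ∀ t ∈ Ioo 0 b, ‖Δ t‖ ≤ D) (u : V) (hp : p ∈ Ioo 0 b) (ht : t ∈ Ioo 0 b) :
    F p t (poleVector F u t) = poleVector F u p := by
  rw [poleVector_of_ne_zero F u ht.1.ne', poleVector_of_ne_zero F u hp.1.ne',
    ← hF.mul_poleLimit hT hΔ hp ht, mul_apply_eq_comp]

theorem poleVector_ne_zero (hF : IsPolePrimitive b N Δ F) (hT : IsPowerFlow N T)
    (hΔ : ∀ t ∈ Ioo 0 b, ‖Δ t‖ ≤ D) (hu : T 0 u = u) (hu0 : u ≠ 0) (ht : t ∈ Ico 0 b) :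
    poleVector F u t ≠ 0 := by
  rcases ht.1.eq_or_lt with rfl | ht0
  · rwa [poleVector_zero]
  intro hzero
  have hb : 0 < b := ht0.trans ht.2
  refine hu0 (tendsto_nhds_unique (hF.tendsto_poleLimit_apply hT hb hΔ hu)
    (tendsto_const_nhds.congr' ?_))
  filter_upwards [Ioo_mem_nhdsGT hb] with s hs
  rw [← poleVector_of_ne_zero F u hs.1.ne', ← hF.apply_poleVector hT hΔ u hs ⟨ht0, ht.2⟩, hzero,
    map_zero]

end IsPolePrimitive

end PoleVector

theorem eq_zero_of_hasDerivAt_neg_div_mul_self {f : ℝ → ℝ} {b w c : ℝ} (hw : 0 < w)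
    (hf : ∀ t ∈ Ioo 0 b, HasDerivAt f (-(w / t * f t)) t) (hc : Tendsto f (𝓝[>] 0) (𝓝 c))
    {t : ℝ} (ht : t ∈ Ioo 0 b) : f t = 0 := by
  have hderiv : ∀ s ∈ Ioo 0 b, HasDerivAt (fun s => s ^ w * f s) 0 s := by
    intro s hs
    refine ((Real.hasDerivAt_rpow_const (Or.inl hs.1.ne')).mul (hf s hs)).congr_deriv ?_
    rw [Real.rpow_sub_one hs.1.ne']
    ring
  have hconst : ∀ s ∈ Ioo 0 b, s ^ w * f s = t ^ w * f t := fun s hs =>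
    isOpen_Ioo.is_const_of_deriv_eq_zero isPreconnected_Ioo
      (fun r hr => (hderiv r hr).differentiableAt.differentiableWithinAt)
      (fun r hr => (hderiv r hr).deriv) hs ht
  have hlim : Tendsto (fun s => s ^ w * f s) (𝓝[>] 0) (𝓝 0) := by
    have hpow : Tendsto (fun s : ℝ => s ^ w) (𝓝[>] 0) (𝓝 0) :=
      ((Real.continuous_rpow_const hw.le).tendsto' 0 0 (Real.zero_rpow hw.ne')).mono_left
        nhdsWithin_le_nhds
    simpa only [zero_mul] using hpow.mul hc
  have hzero : t ^ w * f t = 0 := by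
    refine tendsto_nhds_unique (tendsto_const_nhds.congr' ?_) hlim
    filter_upwards [Ioo_mem_nhdsGT (ht.1.trans ht.2)] with s hs
    exact (hconst s hs).symm
  exact (mul_eq_zero.1 hzero).resolve_left (Real.rpow_pos_of_pos ht.1 w).ne'

section SymmetricForm

variable {V : Type*} [NormedAddCommGroup V] [NormedSpace ℝ V]

/-- The rank-one endomorphism `v w* : x ↦ ⟨w, x⟩ v` for the bilinear form `B = ⟨·, ·⟩`. -/
def formRankOne (B : V →L[ℝ] V →L[ℝ] ℝ) (v w : V) : V →L[ℝ] V :=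
  (B w).smulRight v

/-- The endomorphism `v ∧ w = w v* - v w* : x ↦ ⟨v, x⟩ w - ⟨w, x⟩ v` for the bilinear form
`B = ⟨·, ·⟩`. -/
def formWedge (B : V →L[ℝ] V →L[ℝ] ℝ) (v w : V) : V →L[ℝ] V :=
  formRankOne B w v - formRankOne B v w

variable {B : V →L[ℝ] V →L[ℝ] ℝ} {vp vm : V}

theorem formRankOne_apply (v w x : V) : formRankOne B v w x = B w x • v := rfl

theorem formWedge_apply (v w x : V) : formWedge B v w x = B v x • w - B w x • v := rfl

theorem mul_formRankOne (A : V →L[ℝ] V) (v w : V) :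
    A * formRankOne B v w = formRankOne B (A v) w := by
  ext x
  simp only [mul_apply_eq_comp, formRankOne_apply, map_smul]

theorem formRankOne_smul_left (c : ℝ) (v w : V) :
    formRankOne B (c • v) w = c • formRankOne B v w := by
  ext x
  simp only [smul_apply, formRankOne_apply, smul_comm c]

theorem form_formWedge_self (v w x : V) : B (formWedge B v w x) x = 0 := by
  simp only [formWedge_apply, map_sub, map_smul, sub_apply, smul_apply, smul_eq_mul]
  ring

theorem formWedge_mul_formRankOne_right (hB : ∀ x y, B x y = B y x) (hvp : B vp vp = 0) :
    formWedge B vm vp * formRankOne B vp vm = B vp vm • formRankOne B vp vm := by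
  rw [mul_formRankOne, ← formRankOne_smul_left, formWedge_apply, hvp, zero_smul, sub_zero, hB vm]

theorem formWedge_mul_formRankOne_left (hvm : B vm vm = 0) :
    formWedge B vm vp * formRankOne B vm vp = -(B vp vm • formRankOne B vm vp) := by
  rw [mul_formRankOne, formWedge_apply, hvm, zero_smul, zero_sub, ← neg_smul,
    formRankOne_smul_left, neg_smul]

theorem isPowerFlow_sub_formWedge (hB : ∀ x y, B x y = B y x) (hvp : B vp vp = 0)
    (hvm : B vm vm = 0) (hζ : 0 < B vp vm) :
    ∃ T, IsPowerFlow (B vp vm • 1 - formWedge B vm vp) T ∧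
      T 0 = formRankOne B ((B vp vm)⁻¹ • vp) vm := by
  set ζ := B vp vm
  set P₀ := ζ⁻¹ • formRankOne B vp vm
  set P₂ := ζ⁻¹ • formRankOne B vm vp
  have hW : formWedge B vm vp = ζ • (P₀ - P₂) := by
    rw [← smul_sub, smul_inv_smul₀ hζ.ne', formWedge]
  have hW₀ : formWedge B vm vp * P₀ = ζ • P₀ := by
    rw [mul_smul_comm, formWedge_mul_formRankOne_right hB hvp, smul_comm]
  have hW₂ : formWedge B vm vp * P₂ = -(ζ • P₂) := by
    rw [mul_smul_comm, formWedge_mul_formRankOne_left hvm, smul_neg, smul_comm]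
  have hN₀ : (ζ • 1 - formWedge B vm vp) * P₀ = (0 : ℝ) • P₀ := by
    rw [sub_mul, hW₀, smul_mul_assoc, one_mul, sub_self, zero_smul]
  have hN₁ : (ζ • 1 - formWedge B vm vp) * (1 - P₀ - P₂) = ζ • (1 - P₀ - P₂) := by
    have hW₁ : formWedge B vm vp * (1 - P₀ - P₂) = 0 := by
      rw [mul_sub, mul_sub, mul_one, hW₀, hW₂, hW]
      module
    rw [sub_mul, hW₁, smul_mul_assoc, one_mul, sub_zero]
  have hN₂ : (ζ • 1 - formWedge B vm vp) * P₂ = (2 * ζ) • P₂ := by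
    rw [sub_mul, hW₂, smul_mul_assoc, one_mul]
    module
  refine ⟨_, isPowerFlow_sum (c := ![0, ζ, 2 * ζ]) (P := ![P₀, 1 - P₀ - P₂, P₂]) ?_ ?_ ?_, ?_⟩
  · simp [Fin.forall_fin_succ, hζ.le]
  · simp only [Fin.sum_univ_three, Matrix.cons_val]
    abel
  · intro i
    fin_cases i
    exacts [hN₀, hN₁, hN₂]
  · simp [Fin.sum_univ_three, Real.zero_rpow hζ.ne', Real.zero_rpow (mul_pos two_pos hζ).ne',
      formRankOne_smul_left, P₀]

theorem form_self_eq_zero_of_hasDerivAt (hB : ∀ x y, B x y = B y x) {κ κ' : ℝ → V} {b z : ℝ}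
    (hz : 0 < z) {κ₀ : V} (hκ : ∀ t ∈ Ioo 0 b, HasDerivAt κ (κ' t) t)
    (hform : ∀ t ∈ Ioo 0 b, B (κ' t) (κ t) = -(z / t * B (κ t) (κ t)))
    (hlim : Tendsto κ (𝓝[>] 0) (𝓝 κ₀)) {t : ℝ} (ht : t ∈ Ioo 0 b) : B (κ t) (κ t) = 0 := by
  refine eq_zero_of_hasDerivAt_neg_div_mul_self (f := fun t => B (κ t) (κ t))
    (mul_pos two_pos hz) (fun s hs => ?_)
    ((Continuous.tendsto (f := fun x => B x x) (by fun_prop) κ₀).comp hlim) ht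
  refine ((B.hasFDerivAt.comp_hasDerivAt s (hκ s hs)).clm_apply (hκ s hs)).congr_deriv ?_
  rw [Function.comp_apply, hB (κ s), hform s hs]
  ring

theorem form_self_apply_eq_zero (hB : ∀ x y, B x y = B y x) {A : V →L[ℝ] V}
    (hA : ∀ x y, B (A x) y = -B x (A y)) (x : V) : B (A x) x = 0 :=
  self_eq_neg.1 ((hA x x).trans (congrArg Neg.neg (hB x (A x))))

namespace IsPolePrimitive

variable [CompleteSpace V] {T Δ : ℝ → V →L[ℝ] V} {F : ℝ → ℝ → V →L[ℝ] V} {b D p t z : ℝ}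

theorem form_poleVector_self (hB : ∀ x y, B x y = B y x) (hz : 0 < z) {v w u : V}
    (hF : IsPolePrimitive b (z • 1 - formWedge B v w) Δ F)
    (hT : IsPowerFlow (z • 1 - formWedge B v w) T) (hΔ : ∀ t ∈ Ioo 0 b, ‖Δ t‖ ≤ D)
    (hskew : ∀ t ∈ Ioo 0 b, ∀ x y, B (Δ t x) y = -B x (Δ t y)) (hu : T 0 u = u)
    (ht : t ∈ Ico 0 b) : B (poleVector F u t) (poleVector F u t) = 0 := by
  have hb : 0 < b := ht.1.trans_lt ht.2
  have hlim := hF.tendsto_poleLimit_apply hT hb hΔ hu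
  have hIoo : ∀ s ∈ Ioo 0 b, B (poleLimit F s u) (poleLimit F s u) = 0 := by
    refine fun s => form_self_eq_zero_of_hasDerivAt hB hz
      (fun s hs => hF.hasDerivAt_poleLimit_apply hT hΔ u hs) (fun s hs => ?_) hlim
    simp only [map_neg, map_add, map_smul, neg_apply, add_apply, sub_apply, smul_apply,
      one_apply_eq_self, smul_eq_mul, map_sub, form_formWedge_self,
      form_self_apply_eq_zero hB (hskew s hs)]
    ring
  rcases ht.1.eq_or_lt with rfl | ht0
  · rw [poleVector_zero]
    refine tendsto_nhds_unique
      ((Continuous.tendsto (f := fun x => B x x) (by fun_prop) u).comp hlim)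
      (tendsto_const_nhds.congr' ?_)
    filter_upwards [Ioo_mem_nhdsGT hb] with s hs
    exact (hIoo s hs).symm
  · rw [poleVector_of_ne_zero F u ht0.ne']
    exact hIoo t ⟨ht0, ht.2⟩

theorem poleLimit_eq_formRankOne {N : V →L[ℝ] V} {u w : V} (hF : IsPolePrimitive b N Δ F)
    (hT : IsPowerFlow N T) (hT0 : T 0 = formRankOne B u w) (hΔ : ∀ t ∈ Ioo 0 b, ‖Δ t‖ ≤ D)
    (hp : p ∈ Ioo 0 b) : poleLimit F p = formRankOne B (poleVector F u p) w := by
  rw [← hF.poleLimit_mul hT hΔ hp, hT0, mul_formRankOne, poleVector_of_ne_zero F u hp.1.ne']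

end IsPolePrimitive

end SymmetricForm

theorem stmt10_general {V : Type*} [NormedAddCommGroup V] [NormedSpace ℝ V] [CompleteSpace V]
    (B : V →L[ℝ] V →L[ℝ] ℝ) (hB : ∀ x y, B x y = B y x) {b : ℝ}
    {vp vm : V} (hvp : B vp vp = 0) (hvm : B vm vm = 0) (hζ : 0 < B vp vm)
    {Δ : ℝ → V →L[ℝ] V} (hΔb : ∃ D : ℝ, ∀ t ∈ Ioo 0 b, ‖Δ t‖ ≤ D)
    (hΔskew : ∀ t ∈ Ioo 0 b, ∀ x y : V, B (Δ t x) y = -B x (Δ t y))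
    {G : ℝ → ℝ → V →L[ℝ] V}
    (hG : ∀ p ∈ Ioo 0 b, ∀ t ∈ Ioo 0 b,
      HasDerivAt (G p) (G p t * ((-t⁻¹) • formWedge B vm vp + Δ t)) t)
    (hGp : ∀ p ∈ Ioo 0 b, G p p = 1) :
    ∃ k : ℝ → V, ContinuousOn k (Ico 0 b) ∧
      (∀ t ∈ Ico 0 b, B (k t) (k t) = 0 ∧ k t ≠ 0) ∧
      k 0 = (B vp vm)⁻¹ • vp ∧
      ∀ p ∈ Ioo 0 b,
        Tendsto (fun t : ℝ => (t / p) ^ B vp vm • G p t) (𝓝[>] 0)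
          (𝓝 (formRankOne B (k p) vm)) ∧
        ∀ t ∈ Ioo 0 b, (t / p) ^ B vp vm • G p t (k t) = k p := by
  obtain ⟨D, hΔ⟩ := hΔb
  set ζ := B vp vm
  set u := ζ⁻¹ • vp
  have hF : IsPolePrimitive b (ζ • 1 - formWedge B vm vp) Δ (fun p t => (t / p) ^ ζ • G p t) := by
    have hGprim : IsPolePrimitive b (-formWedge B vm vp) Δ G :=
      ⟨by simpa only [smul_neg, neg_smul] using hG, hGp⟩
    simpa only [sub_eq_add_neg] using hGprim.rescale ζ
  obtain ⟨T, hT, hT0⟩ := isPowerFlow_sub_formWedge hB hvp hvm hζ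
  have hu0 : u ≠ 0 := smul_ne_zero (inv_ne_zero hζ.ne') fun h => hζ.ne' (by simp [ζ, h])
  have hu : T 0 u = u := by
    rw [hT0, formRankOne_apply, map_smul, hB, smul_eq_mul, inv_mul_cancel₀ hζ.ne', one_smul]
  refine ⟨poleVector _ u, hF.continuousOn_poleVector hT hΔ hu, fun t ht => ⟨?_, ?_⟩,
    poleVector_zero _ u, fun p hp => ⟨?_, fun t ht => hF.apply_poleVector hT hΔ u hp ht⟩⟩
  · exact hF.form_poleVector_self hB hζ hT hΔ hΔskew hu ht
  · exact hF.poleVector_ne_zero hT hΔ hu hu0 ht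
  · rw [← hF.poleLimit_eq_formRankOne hT hT0 hΔ hp]
    exact hF.tendsto_poleLimit hT hΔ hp

section Minkowski

variable {n : ℕ}

/-- The Minkowski inner product `mink` as a continuous bilinear form. -/
def minkForm : E n →L[ℝ] E n →L[ℝ] ℝ :=
  LinearMap.toContinuousBilinearMap
    (LinearMap.mk₂ ℝ mink mink_add_left mink_smul_left mink_add_right
      fun c x y => mink_smul_right x c y)

theorem wedge_eq_formWedge (v w : E n) : wedge v w = formWedge minkForm v w := rfl

theorem rankOne_eq_formRankOne (v w : E n) : rankOne v w = formRankOne minkForm v w := by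
  ext1 x
  exact congrArg (· • v) (mink_comm x w)

end Minkowski

/-- Proposition 3.6: limiting behaviour of primitives of Minkowski pole forms. -/
theorem stmt10 {n : ℕ} (b : ℝ) (hb : 0 < b)
    (vp vm : E n) (hvp : mink vp vp = 0) (hvm : mink vm vm = 0)
    (hζ : 0 < mink vp vm)
    (Δ : ℝ → E n →L[ℝ] E n)
    (hΔc : ContinuousOn Δ (Set.Ioo 0 b))
    (hΔb : ∃ D : ℝ, ∀ t ∈ Set.Ioo (0:ℝ) b, ‖Δ t‖ ≤ D)
    (hΔskew : ∀ t ∈ Set.Ioo (0:ℝ) b, ∀ x y : E n, mink (Δ t x) y = - mink x (Δ t y))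
    (G : ℝ → ℝ → E n →L[ℝ] E n)
    (hG : ∀ p ∈ Set.Ioo (0:ℝ) b, ∀ t ∈ Set.Ioo (0:ℝ) b,
      HasDerivAt (G p) (G p t * ((-t⁻¹) • wedge vm vp + Δ t)) t)
    (hGp : ∀ p ∈ Set.Ioo (0:ℝ) b, G p p = 1) :
    ∃ k : ℝ → E n, ContinuousOn k (Set.Ico 0 b) ∧
      (∀ t ∈ Set.Ico (0:ℝ) b, mink (k t) (k t) = 0 ∧ k t ≠ 0) ∧
      k 0 = (mink vp vm)⁻¹ • vp ∧
      ∀ p ∈ Set.Ioo (0:ℝ) b,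
        Tendsto (fun t : ℝ => (t / p) ^ (mink vp vm) • G p t)
          (𝓝[>] 0) (𝓝 (rankOne (k p) vm)) ∧
        ∀ t ∈ Set.Ioo (0:ℝ) b, (t / p) ^ (mink vp vm) • G p t (k t) = k p := by
  simp only [wedge_eq_formWedge, rankOne_eq_formRankOne] at hG ⊢
  exact stmt10_general minkForm mink_comm hvp hvm hζ hΔb hΔskew hG hGp
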